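/- arXiv:math/0606401 — 2 statements merged into one kernel-verified Lean document; each statement's English description precedes it below -/
import Mathlib

section
/- Fix integers n, k ≥ 1, and let A be a connection form on ℝⁿ with curvature F. For every smooth ℝᵏ-valued 1-form ψ on ℝⁿ, every index b and every point x, −Σ_b D_b((M^D ψ)_b)(x) = Σ_{a,b} (D_a F_{ab})(x) ψ_b(x), where D_a F_{ab} = ∂_a F_{ab} + A_a F_{ab} − F_{ab} A_a and D_b applied to the ℝᵏ-valued map (M^D ψ)_b means ∂_b + A_b. (Flat-chart form of the second part of Lemma 3.1: δ^D M^D = −ι(δ^D F).) -/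
noncomputable section

/-- Points of `ℝⁿ`. -/
abbrev Vec (n : ℕ) := Fin n → ℝ

/-- Real `k × k` matrices, as plain functions. -/
abbrev Mat (k : ℕ) := Fin k → Fin k → ℝ

/-- Matrix product. -/
def matMul {k : ℕ} (M N : Mat k) : Mat k := fun i j => ∑ l, M i l * N l j

/-- Matrix acting on a vector. -/
def matVec {k : ℕ} (M : Mat k) (v : Fin k → ℝ) : Fin k → ℝ := fun i => ∑ j, M i j * v j

/-- The identity matrix. -/
def idMat (k : ℕ) : Mat k := fun i j => if i = j then 1 else 0

/-- Partial derivative `∂_a f` in the `a`-th coordinate direction. -/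
def pd {n : ℕ} {E : Type*} [NormedAddCommGroup E] [NormedSpace ℝ E]
    (a : Fin n) (f : Vec n → E) (x : Vec n) : E :=
  fderiv ℝ f x (Pi.single a 1)

/-- The coupled covariant derivative `D_a φ = ∂_a φ + A_a φ` on `ℝᵏ`-valued maps. -/
def Dv {n k : ℕ} (A : Fin n → Vec n → Mat k) (a : Fin n)
    (φ : Vec n → Fin k → ℝ) (x : Vec n) : Fin k → ℝ :=
  pd a φ x + matVec (A a x) (φ x)

/-- The covariant derivative `D_a S = ∂_a S + A_a S − S A_a` on matrix-valued maps. -/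
def Dm {n k : ℕ} (A : Fin n → Vec n → Mat k) (a : Fin n)
    (S : Vec n → Mat k) (x : Vec n) : Mat k :=
  pd a S x + matMul (A a x) (S x) - matMul (S x) (A a x)

/-- The curvature `F_{ab} = ∂_a A_b − ∂_b A_a + A_a A_b − A_b A_a` of a connection form. -/
def curv {n k : ℕ} (A : Fin n → Vec n → Mat k) (a b : Fin n) (x : Vec n) : Mat k :=
  pd a (A b) x - pd b (A a) x + matMul (A a x) (A b x) - matMul (A b x) (A a x)

/-- The middle operator `(M^D ψ)_b = −Σ_a D_a(D_a ψ_b − D_b ψ_a) − Σ_a F_{ba} ψ_a`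
of the Yang–Mills detour sequence, on `ℝᵏ`-valued 1-forms. -/
def MD {n k : ℕ} (A : Fin n → Vec n → Mat k) (ψ : Fin n → Vec n → Fin k → ℝ)
    (b : Fin n) (x : Vec n) : Fin k → ℝ :=
  -(∑ a, Dv A a (fun y => Dv A a (ψ b) y - Dv A b (ψ a) y) x)
    - ∑ a, matVec (curv A b a x) (ψ a x)

/-!
Let `G_{ab} = D_a ψ_b − D_b ψ_a`. As `G` is antisymmetric, `Σ_{b,a} D_b D_a G_{ab}` involves only
commutators of covariant derivatives, so it equals `½ Σ F_{ba} G_{ab} = −Σ F_{ba} D_b ψ_a`.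
In the divergence of `M^D ψ` this cancels the part of `Σ D_b (F_{ba} ψ_a)` in which the derivative
falls on `ψ`; what is left is the divergence of `F` acting on `ψ`.
-/

section MatrixAction

variable {k : ℕ}

theorem isBilinearMap_matVec : IsBilinearMap ℝ (matVec (k := k)) where
  add_left := Matrix.add_mulVec (α := ℝ)
  smul_left := Matrix.smul_mulVec (α := ℝ)
  add_right := Matrix.mulVec_add (α := ℝ)
  smul_right c M v := Matrix.mulVec_smul M c v

theorem isBilinearMap_matMul : IsBilinearMap ℝ (matMul (k := k)) where
  add_left := Matrix.add_mul (α := ℝ)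
  smul_left := Matrix.smul_mul (α := ℝ)
  add_right := Matrix.mul_add (α := ℝ)
  smul_right c M N := Matrix.mul_smul M c N

theorem matVec_add (M : Mat k) (v w : Fin k → ℝ) :
    matVec M (v + w) = matVec M v + matVec M w :=
  Matrix.mulVec_add M v w

theorem matVec_sub (M : Mat k) (v w : Fin k → ℝ) :
    matVec M (v - w) = matVec M v - matVec M w :=
  Matrix.mulVec_sub M v w

theorem matVec_neg (M : Mat k) (v : Fin k → ℝ) : matVec M (-v) = -matVec M v :=
  Matrix.mulVec_neg v M

theorem matVec_sum {ι : Type*} (s : Finset ι) (M : Mat k) (v : ι → Fin k → ℝ) :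
    matVec M (∑ i ∈ s, v i) = ∑ i ∈ s, matVec M (v i) :=
  Matrix.mulVec_sum M s v

theorem add_matVec (M N : Mat k) (v : Fin k → ℝ) :
    matVec (M + N) v = matVec M v + matVec N v :=
  Matrix.add_mulVec M N v

theorem sub_matVec (M N : Mat k) (v : Fin k → ℝ) :
    matVec (M - N) v = matVec M v - matVec N v :=
  Matrix.sub_mulVec M N v

theorem neg_matVec (M : Mat k) (v : Fin k → ℝ) : matVec (-M) v = -matVec M v :=
  Matrix.neg_mulVec v M

theorem sum_matVec {ι : Type*} (s : Finset ι) (M : ι → Mat k) (v : Fin k → ℝ) :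
    matVec (∑ i ∈ s, M i) v = ∑ i ∈ s, matVec (M i) v :=
  Matrix.sum_mulVec s M v

theorem matMul_matVec (M N : Mat k) (v : Fin k → ℝ) :
    matVec (matMul M N) v = matVec M (matVec N v) :=
  (Matrix.mulVec_mulVec v M N).symm

end MatrixAction

section PartialDerivative

variable {n k : ℕ} {E : Type*} [NormedAddCommGroup E] [NormedSpace ℝ E] {x : Vec n}

theorem pd_add {f g : Vec n → E} (hf : DifferentiableAt ℝ f x) (hg : DifferentiableAt ℝ g x)
    (a : Fin n) : pd a (fun y => f y + g y) x = pd a f x + pd a g x := by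
  simp only [pd, fderiv_fun_add hf hg, add_apply]

theorem pd_sub {f g : Vec n → E} (hf : DifferentiableAt ℝ f x) (hg : DifferentiableAt ℝ g x)
    (a : Fin n) : pd a (fun y => f y - g y) x = pd a f x - pd a g x := by
  simp only [pd, fderiv_fun_sub hf hg, sub_apply]

theorem pd_neg (f : Vec n → E) (a : Fin n) : pd a (fun y => -f y) x = -pd a f x := by
  simp only [pd, fderiv_fun_neg, neg_apply]

theorem pd_sum {ι : Type*} {s : Finset ι} {f : ι → Vec n → E}
    (hf : ∀ i ∈ s, DifferentiableAt ℝ (f i) x) (a : Fin n) :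
    pd a (fun y => ∑ i ∈ s, f i y) x = ∑ i ∈ s, pd a (f i) x := by
  simp only [pd, fderiv_fun_sum hf, sum_apply]

theorem pd_matVec {S : Vec n → Mat k} {φ : Vec n → Fin k → ℝ} (hS : DifferentiableAt ℝ S x)
    (hφ : DifferentiableAt ℝ φ x) (a : Fin n) :
    pd a (fun y => matVec (S y) (φ y)) x
      = matVec (pd a S x) (φ x) + matVec (S x) (pd a φ x) := by
  have leibniz := DFunLike.congr_fun
    (isBilinearMap_matVec.toContinuousBilinearMap.fderiv_of_bilinear hS hφ) (Pi.single a 1)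
  exact leibniz.trans (add_comm _ _)

theorem pd_pd_comm {f : Vec n → E} (hf : ContDiffAt ℝ 2 f x) (a b : Fin n) :
    pd a (pd b f) x = pd b (pd a f) x := by
  have hf' : DifferentiableAt ℝ (fderiv ℝ f) x :=
    (hf.fderiv_right (m := 1) one_add_one_eq_two.le).differentiableAt one_ne_zero
  have pd_pd_eq (c d : Fin n) :
      pd c (pd d f) x = fderiv ℝ (fderiv ℝ f) x (Pi.single c 1) (Pi.single d 1) := by
    change fderiv ℝ (fun y => fderiv ℝ f y (Pi.single d 1)) x (Pi.single c 1) = _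
    simp [fderiv_clm_apply hf' (differentiableAt_const _)]
  rw [pd_pd_eq, pd_pd_eq]
  exact hf.isSymmSndFDerivAt (by simp) _ _

end PartialDerivative

section Regularity

variable {n k : ℕ} {x : Vec n} {r s : WithTop ℕ∞}

theorem contDiffAt_pd {E : Type*} [NormedAddCommGroup E] [NormedSpace ℝ E] {f : Vec n → E}
    (hf : ContDiffAt ℝ s f x) (hrs : r + 1 ≤ s) (a : Fin n) : ContDiffAt ℝ r (pd a f) x :=
  (hf.fderiv_right hrs).clm_apply contDiffAt_const

theorem contDiffAt_matVec {S : Vec n → Mat k} {φ : Vec n → Fin k → ℝ}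
    (hS : ContDiffAt ℝ r S x) (hφ : ContDiffAt ℝ r φ x) :
    ContDiffAt ℝ r (fun y => matVec (S y) (φ y)) x :=
  (hS.continuousLinearMap_comp isBilinearMap_matVec.toContinuousBilinearMap).clm_apply hφ

theorem contDiffAt_matMul {S T : Vec n → Mat k}
    (hS : ContDiffAt ℝ r S x) (hT : ContDiffAt ℝ r T x) :
    ContDiffAt ℝ r (fun y => matMul (S y) (T y)) x :=
  (hS.continuousLinearMap_comp isBilinearMap_matMul.toContinuousBilinearMap).clm_apply hT

variable {A : Fin n → Vec n → Mat k} {a b : Fin n}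

theorem contDiffAt_Dv {φ : Vec n → Fin k → ℝ} (hA : ContDiffAt ℝ r (A a) x)
    (hφ : ContDiffAt ℝ s φ x) (hrs : r + 1 ≤ s) : ContDiffAt ℝ r (Dv A a φ) x :=
  (contDiffAt_pd hφ hrs a).add (contDiffAt_matVec hA (hφ.of_le (le_self_add.trans hrs)))

theorem contDiffAt_curv (hAa : ContDiffAt ℝ s (A a) x) (hAb : ContDiffAt ℝ s (A b) x)
    (hrs : r + 1 ≤ s) : ContDiffAt ℝ r (curv A a b) x := by
  have hr : r ≤ s := le_self_add.trans hrs
  exact (((contDiffAt_pd hAb hrs a).sub (contDiffAt_pd hAa hrs b)).add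
    (contDiffAt_matMul (hAa.of_le hr) (hAb.of_le hr))).sub
      (contDiffAt_matMul (hAb.of_le hr) (hAa.of_le hr))

end Regularity

section CovariantDerivative

variable {n k : ℕ} {A : Fin n → Vec n → Mat k} {x : Vec n}

theorem Dv_sub {φ χ : Vec n → Fin k → ℝ} (hφ : DifferentiableAt ℝ φ x)
    (hχ : DifferentiableAt ℝ χ x) (a : Fin n) :
    Dv A a (fun y => φ y - χ y) x = Dv A a φ x - Dv A a χ x := by
  simp only [Dv, pd_sub hφ hχ, matVec_sub]
  abel

theorem Dv_neg (φ : Vec n → Fin k → ℝ) (a : Fin n) :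
    Dv A a (fun y => -φ y) x = -Dv A a φ x := by
  simp only [Dv, pd_neg, matVec_neg, neg_add]

theorem Dv_sum {ι : Type*} {s : Finset ι} {φ : ι → Vec n → Fin k → ℝ}
    (hφ : ∀ i ∈ s, DifferentiableAt ℝ (φ i) x) (a : Fin n) :
    Dv A a (fun y => ∑ i ∈ s, φ i y) x = ∑ i ∈ s, Dv A a (φ i) x := by
  simp only [Dv, pd_sum hφ, matVec_sum, Finset.sum_add_distrib]

theorem Dv_matVec {S : Vec n → Mat k} {φ : Vec n → Fin k → ℝ} (hS : DifferentiableAt ℝ S x)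
    (hφ : DifferentiableAt ℝ φ x) (a : Fin n) :
    Dv A a (fun y => matVec (S y) (φ y)) x
      = matVec (Dm A a S x) (φ x) + matVec (S x) (Dv A a φ x) := by
  simp only [Dv, Dm, pd_matVec hS hφ, sub_matVec, add_matVec, matVec_add, matMul_matVec]
  abel

theorem curv_antisymm (A : Fin n → Vec n → Mat k) (a b : Fin n) (x : Vec n) :
    curv A a b x = -curv A b a x := by
  simp only [curv]
  abel

theorem pd_Dv {φ : Vec n → Fin k → ℝ} {b : Fin n} (hA : DifferentiableAt ℝ (A b) x)
    (hφ : ContDiffAt ℝ 2 φ x) (a : Fin n) :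
    pd a (Dv A b φ) x
      = pd a (pd b φ) x + (matVec (pd a (A b) x) (φ x) + matVec (A b x) (pd a φ x)) := by
  have hφ₁ : DifferentiableAt ℝ φ x := hφ.differentiableAt two_ne_zero
  have hpd : DifferentiableAt ℝ (pd b φ) x :=
    (contDiffAt_pd (r := 1) hφ one_add_one_eq_two.le b).differentiableAt one_ne_zero
  have hmatVec : DifferentiableAt ℝ (fun y => matVec (A b y) (φ y)) x :=
    (isBilinearMap_matVec.toContinuousBilinearMap.differentiableAt.comp x hA).clm_apply hφ₁
  exact (pd_add hpd hmatVec a).trans (congrArg _ (pd_matVec hA hφ₁ a))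

theorem Dv_Dv_sub_Dv_Dv {φ : Vec n → Fin k → ℝ} {a b : Fin n}
    (hAa : DifferentiableAt ℝ (A a) x) (hAb : DifferentiableAt ℝ (A b) x)
    (hφ : ContDiffAt ℝ 2 φ x) :
    Dv A a (Dv A b φ) x - Dv A b (Dv A a φ) x = matVec (curv A a b x) (φ x) := by
  rw [Dv, Dv.eq_def A b (Dv A a φ), pd_Dv hAb hφ a, pd_Dv hAa hφ b, pd_pd_comm hφ a b]
  simp only [Dv, curv, sub_matVec, add_matVec, matVec_add, matMul_matVec]
  abel

theorem two_nsmul_sum_Dv_Dv_of_antisymm {G : Fin n → Fin n → Vec n → Fin k → ℝ}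
    (hA : ∀ a, DifferentiableAt ℝ (A a) x) (hG : ∀ a b, ContDiffAt ℝ 2 (G a b) x)
    (antisymm : ∀ a b y, G a b y = -G b a y) :
    2 • ∑ b, ∑ a, Dv A b (Dv A a (G a b)) x = ∑ b, ∑ a, matVec (curv A b a x) (G a b x) := by
  have Dv_Dv_antisymm (a b : Fin n) : Dv A a (Dv A b (G b a)) x = -Dv A a (Dv A b (G a b)) x := by
    have inner : Dv A b (G b a) = fun y => -Dv A b (G a b) y := by
      rw [funext (antisymm b a)]
      exact funext fun y => Dv_neg (G a b) b
    rw [inner, Dv_neg]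
  calc 2 • ∑ b, ∑ a, Dv A b (Dv A a (G a b)) x
      = ∑ b, ∑ a, Dv A b (Dv A a (G a b)) x + ∑ b, ∑ a, Dv A a (Dv A b (G b a)) x := by
        rw [two_nsmul]
        exact congrArg _ Finset.sum_comm
    _ = ∑ b, ∑ a, (Dv A b (Dv A a (G a b)) x - Dv A a (Dv A b (G a b)) x) := by
        simp only [Dv_Dv_antisymm, ← Finset.sum_add_distrib, sub_eq_add_neg]
    _ = ∑ b, ∑ a, matVec (curv A b a x) (G a b x) := by
        simp only [Dv_Dv_sub_Dv_Dv (hA _) (hA _) (hG _ _)]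

end CovariantDerivative

/-- The covariant exterior derivative `(d^D ψ)_{ab} = D_a ψ_b − D_b ψ_a` of an `ℝᵏ`-valued 1-form,
whose divergence is the second-order part of `M^D`. -/
def covExtDeriv {n k : ℕ} (A : Fin n → Vec n → Mat k) (ψ : Fin n → Vec n → Fin k → ℝ)
    (a b : Fin n) (x : Vec n) : Fin k → ℝ :=
  Dv A a (ψ b) x - Dv A b (ψ a) x

section DetourOperator

variable {n k : ℕ} {A : Fin n → Vec n → Mat k} {ψ : Fin n → Vec n → Fin k → ℝ} {x : Vec n}

theorem covExtDeriv_antisymm (A : Fin n → Vec n → Mat k) (ψ : Fin n → Vec n → Fin k → ℝ)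
    (a b : Fin n) (x : Vec n) : covExtDeriv A ψ a b x = -covExtDeriv A ψ b a x :=
  (neg_sub _ _).symm

theorem contDiffAt_covExtDeriv {r s : WithTop ℕ∞} {a b : Fin n}
    (hAa : ContDiffAt ℝ r (A a) x) (hAb : ContDiffAt ℝ r (A b) x)
    (hψa : ContDiffAt ℝ s (ψ a) x) (hψb : ContDiffAt ℝ s (ψ b) x) (hrs : r + 1 ≤ s) :
    ContDiffAt ℝ r (covExtDeriv A ψ a b) x :=
  (contDiffAt_Dv hAa hψb hrs).sub (contDiffAt_Dv hAb hψa hrs)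

theorem sum_curv_covExtDeriv (A : Fin n → Vec n → Mat k) (ψ : Fin n → Vec n → Fin k → ℝ)
    (x : Vec n) :
    ∑ b, ∑ a, matVec (curv A b a x) (covExtDeriv A ψ a b x)
      = 2 • -∑ b, ∑ a, matVec (curv A b a x) (Dv A b (ψ a) x) := by
  have swap : ∑ b, ∑ a, matVec (curv A b a x) (Dv A a (ψ b) x)
      = -∑ b, ∑ a, matVec (curv A b a x) (Dv A b (ψ a) x) := by
    rw [Finset.sum_comm]
    simp only [← Finset.sum_neg_distrib, ← neg_matVec, ← curv_antisymm]
  simp only [covExtDeriv, matVec_sub, Finset.sum_sub_distrib, swap]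
  abel

theorem sum_Dv_Dv_covExtDeriv (hA : ∀ a, ContDiffAt ℝ 2 (A a) x)
    (hψ : ∀ a, ContDiffAt ℝ 3 (ψ a) x) :
    ∑ b, ∑ a, Dv A b (Dv A a (covExtDeriv A ψ a b)) x
      = -∑ b, ∑ a, matVec (curv A b a x) (Dv A b (ψ a) x) := by
  refine nsmul_right_injective two_ne_zero ?_
  exact (two_nsmul_sum_Dv_Dv_of_antisymm (fun a => (hA a).differentiableAt two_ne_zero)
    (fun a b => contDiffAt_covExtDeriv (hA a) (hA b) (hψ a) (hψ b) two_add_one_eq_three.le)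
    (covExtDeriv_antisymm A ψ)).trans (sum_curv_covExtDeriv A ψ x)

theorem Dv_MD (hA : ∀ a, ContDiffAt ℝ 2 (A a) x) (hψ : ∀ a, ContDiffAt ℝ 3 (ψ a) x)
    (b : Fin n) :
    Dv A b (MD A ψ b) x
      = -(∑ a, Dv A b (Dv A a (covExtDeriv A ψ a b)) x)
        - ∑ a, (matVec (Dm A b (curv A b a) x) (ψ a x)
          + matVec (curv A b a x) (Dv A b (ψ a) x)) := by
  have hψ₁ (a : Fin n) : DifferentiableAt ℝ (ψ a) x := (hψ a).differentiableAt three_ne_zero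
  have hcurv (a : Fin n) : ContDiffAt ℝ 1 (curv A b a) x :=
    contDiffAt_curv (hA b) (hA a) one_add_one_eq_two.le
  have hdiv (a : Fin n) : DifferentiableAt ℝ (Dv A a (covExtDeriv A ψ a b)) x :=
    (contDiffAt_Dv (r := 1) ((hA a).of_le one_le_two)
      (contDiffAt_covExtDeriv (hA a) (hA b) (hψ a) (hψ b) two_add_one_eq_three.le)
      one_add_one_eq_two.le).differentiableAt one_ne_zero
  have hcurvψ (a : Fin n) : DifferentiableAt ℝ (fun y => matVec (curv A b a y) (ψ a y)) x :=
    (contDiffAt_matVec (hcurv a) ((hψ a).of_le (by norm_num))).differentiableAt one_ne_zero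
  calc Dv A b (MD A ψ b) x
      = -(∑ a, Dv A b (Dv A a (covExtDeriv A ψ a b)) x)
        - ∑ a, Dv A b (fun y => matVec (curv A b a y) (ψ a y)) x := by
        rw [← Dv_sum (fun a _ => hdiv a), ← Dv_sum (fun a _ => hcurvψ a), ← Dv_neg]
        exact Dv_sub (DifferentiableAt.fun_sum fun a _ => hdiv a).neg
          (DifferentiableAt.fun_sum fun a _ => hcurvψ a) b
    _ = _ := by
        simp only [Dv_matVec ((hcurv _).differentiableAt one_ne_zero) (hψ₁ _)]

theorem dD_comp_MD_general (hA : ∀ a, ContDiffAt ℝ 2 (A a) x)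
    (hψ : ∀ a, ContDiffAt ℝ 3 (ψ a) x) :
    -(∑ b, Dv A b (MD A ψ b) x) = ∑ b, matVec (∑ a, Dm A a (curv A a b) x) (ψ b x) := by
  calc -(∑ b, Dv A b (MD A ψ b) x)
      = ∑ b, ∑ a, Dv A b (Dv A a (covExtDeriv A ψ a b)) x
        + (∑ b, ∑ a, matVec (Dm A b (curv A b a) x) (ψ a x)
          + ∑ b, ∑ a, matVec (curv A b a x) (Dv A b (ψ a) x)) := by
        simp only [Dv_MD hA hψ, Finset.sum_sub_distrib, Finset.sum_neg_distrib,
          Finset.sum_add_distrib]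
        abel
    _ = ∑ b, ∑ a, matVec (Dm A b (curv A b a) x) (ψ a x) := by
        rw [sum_Dv_Dv_covExtDeriv hA hψ]
        abel
    _ = ∑ b, matVec (∑ a, Dm A a (curv A a b) x) (ψ b x) := by
        rw [Finset.sum_comm]
        simp only [sum_matVec]

end DetourOperator

/-- Flat-chart form of the second part of Lemma 3.1: `δ^D M^D = −ι(δ^D F)`, i.e.
`−Σ_b D_b((M^D ψ)_b) = Σ_{a,b} (D_a F_{ab}) ψ_b`. -/
theorem dD_comp_MD (n k : ℕ) (hn : 1 ≤ n) (hk : 1 ≤ k)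
    (A : Fin n → Vec n → Mat k) (hA : ∀ a, ContDiff ℝ (⊤ : ℕ∞) (A a))
    (ψ : Fin n → Vec n → Fin k → ℝ) (hψ : ∀ a, ContDiff ℝ (⊤ : ℕ∞) (ψ a))
    (b : Fin n) (x : Vec n) :
    -(∑ c, Dv A c (fun y => MD A ψ c y) x)
      = ∑ c, matVec (∑ a, Dm A a (curv A a c) x) (ψ c x) :=
  dD_comp_MD_general (fun a => (contDiff_infty.1 (hA a) 2).contDiffAt)
    (fun a => (contDiff_infty.1 (hψ a) 3).contDiffAt)
end
end

section
/- Let n ≥ 1 and let Cl be the Clifford algebra of the quadratic form Q(x) = −‖x‖²/2 on Euclidean space ℝⁿ; set β_a = ι(e_a), so that β_a β_b + β_b β_a = −δ_{ab}·1 in Cl. Let R be a Riemann-type tensor on {1,…,n}. Then Σ_{a,b,c,d} R_{abcd} · β_a β_b β_c β_d = −(Sc/2)·1 in Cl, where Sc = Σ_{a,c} R_{caca}. (Second identity of equation (4.13) in the proof of Proposition 4.7.) -/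
open CliffordAlgebra

/-!
Contract the last three indices first. Up to Clifford relations, antisymmetry in the last two
indices makes `∑ r_{bcd} β_b β_c β_d` invariant under rotating the three factors, whereas the
Bianchi identity says that the three rotations sum to zero; hence three times the sum consists of
the correction terms alone, and these form a Ricci-type contraction. That contraction is symmetric,
so against `β_a β_c` only the anticommutator, a scalar, survives.
-/

section

variable {I K M : Type*} [Fintype I] [CommRing K] [AddCommGroup M] [Module K M]
  (Q : QuadraticForm K M) (v : I → M)

open QuadraticMap (polar)

theorem sum_smul_ι_mul_ι_mul_ι_swap_left {r : I → I → I → K} (hr : ∀ b c d, r b c d = -r b d c) :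
    ∑ b, ∑ c, ∑ d, r b c d • (ι Q (v c) * ι Q (v b) * ι Q (v d)) =
      -∑ b, ∑ c, ∑ d, (r b c d * polar Q (v b) (v d)) • ι Q (v c) -
        ∑ b, ∑ c, ∑ d, r b c d • (ι Q (v b) * ι Q (v c) * ι Q (v d)) := by
  have polar_swap : ∑ b, ∑ c, ∑ d, (r b c d * polar Q (v c) (v b)) • ι Q (v d) =
      -∑ b, ∑ c, ∑ d, (r b c d * polar Q (v b) (v d)) • ι Q (v c) := by
    simp only [← Finset.sum_neg_distrib, ← neg_smul, ← neg_mul]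
    refine Finset.sum_congr rfl fun b _ => ?_
    rw [Finset.sum_comm]
    simp only [← hr, QuadraticMap.polar_comm Q (v b)]
  rw [← polar_swap]
  simp only [← Finset.sum_sub_distrib, mul_smul, ← smul_sub]
  congr! 4 with b _ c _ d _
  rw [ι_mul_ι_comm, sub_mul, Algebra.smul_def]

theorem sum_smul_ι_mul_ι_mul_ι_of_cyclic (h3 : IsSMulRegular (CliffordAlgebra Q) (3 : K))
    {r : I → I → I → K} (hr : ∀ b c d, r b c d = -r b d c)
    (hcyc : ∀ b c d, r b c d + r c d b + r d b c = 0) :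
    ∑ b, ∑ c, ∑ d, r b c d • (ι Q (v b) * ι Q (v c) * ι Q (v d)) =
      -∑ b, ∑ c, ∑ d, (r b c d * polar Q (v b) (v d)) • ι Q (v c) := by
  have swap_left := sum_smul_ι_mul_ι_mul_ι_swap_left Q v hr
  have rotate_right : ∑ b, ∑ c, ∑ d, r c d b • (ι Q (v b) * ι Q (v c) * ι Q (v d)) =
      -∑ b, ∑ c, ∑ d, r b c d • (ι Q (v c) * ι Q (v b) * ι Q (v d)) := by
    rw [← Finset.sum_comm_cycle]
    simp only [← Finset.sum_neg_distrib, ← neg_smul, ← hr]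
    exact Finset.sum_congr rfl fun b _ => Finset.sum_comm
  have rotate_left : ∑ b, ∑ c, ∑ d, r d b c • (ι Q (v b) * ι Q (v c) * ι Q (v d)) =
      ∑ b, ∑ c, ∑ d, (r b c d * polar Q (v b) (v d)) • ι Q (v c) -
        ∑ b, ∑ c, ∑ d, r b c d • (ι Q (v c) * ι Q (v b) * ι Q (v d)) := by
    rw [Finset.sum_comm_cycle]
    simp only [← Finset.sum_sub_distrib, mul_smul, ← smul_sub]
    congr! 4 with b _ c _ d _
    rw [mul_assoc, ι_mul_ι_comm (v d), mul_sub, ← mul_assoc, QuadraticMap.polar_comm,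
      ← Algebra.commutes, Algebra.smul_def]
  have cyclic_sum :
      ∑ b, ∑ c, ∑ d, (r b c d + r c d b + r d b c) • (ι Q (v b) * ι Q (v c) * ι Q (v d)) = 0 := by
    simp only [hcyc, zero_smul, Finset.sum_const_zero]
  simp only [add_smul, Finset.sum_add_distrib, rotate_right, rotate_left, swap_left] at cyclic_sum
  refine h3 (sub_eq_zero.mp ?_)
  rw [← cyclic_sum]
  module

/-- The Ricci-type contraction of a four-index array `R` in its second and fourth slots against the
polar form of `Q`. For an orthonormal family `v` and `Q x = -‖x‖² / 2` the polar form is minus the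
inner product, so on Riemann-type tensors this is the negative of the Ricci contraction. -/
def polarRicci (R : I → I → I → I → K) (a c : I) : K :=
  ∑ b, ∑ d, R a b c d * polar Q (v b) (v d)

theorem polarRicci_comm {R : I → I → I → I → K} (hpair : ∀ a b c d, R a b c d = R c d a b)
    (a c : I) : polarRicci Q v R a c = polarRicci Q v R c a := by
  rw [polarRicci, polarRicci, Finset.sum_comm]
  congr! 2 with d _ b
  rw [hpair, QuadraticMap.polar_comm]

theorem sum_smul_ι_mul_ι_mul_ι_mul_ι_eq_neg_sum_polarRicci
    (h3 : IsSMulRegular (CliffordAlgebra Q) (3 : K)) {R : I → I → I → I → K}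
    (hanti : ∀ a b c d, R a b c d = -R a b d c)
    (hBianchi : ∀ a b c d, R a b c d + R a c d b + R a d b c = 0) :
    ∑ a, ∑ b, ∑ c, ∑ d, R a b c d • (ι Q (v a) * ι Q (v b) * ι Q (v c) * ι Q (v d)) =
      -∑ a, ∑ c, polarRicci Q v R a c • (ι Q (v a) * ι Q (v c)) := by
  rw [← Finset.sum_neg_distrib]
  refine Finset.sum_congr rfl fun a _ => ?_
  have contraction := congrArg (ι Q (v a) * ·)
    (sum_smul_ι_mul_ι_mul_ι_of_cyclic Q v h3 (hanti a) (hBianchi a))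
  simp only [Finset.mul_sum, mul_neg, mul_smul_comm, ← mul_assoc] at contraction
  rw [contraction, Finset.sum_comm]
  simp only [polarRicci, Finset.sum_smul]

theorem two_smul_sum_smul_ι_mul_ι_of_symm {s : I → I → K} (hs : ∀ a c, s a c = s c a) :
    (2 : K) • ∑ a, ∑ c, s a c • (ι Q (v a) * ι Q (v c)) =
      (∑ a, ∑ c, s a c * polar Q (v a) (v c)) • 1 :=
  calc (2 : K) • ∑ a, ∑ c, s a c • (ι Q (v a) * ι Q (v c))
      = ∑ a, ∑ c, s a c • (ι Q (v a) * ι Q (v c)) +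
          ∑ a, ∑ c, s a c • (ι Q (v c) * ι Q (v a)) := by
        rw [two_smul]
        congr 1
        rw [Finset.sum_comm]
        simp only [hs]
    _ = (∑ a, ∑ c, s a c * polar Q (v a) (v c)) • 1 := by
        simp only [← Finset.sum_add_distrib, ← smul_add, ι_mul_ι_add_swap, Finset.sum_smul,
          mul_smul, Algebra.algebraMap_eq_smul_one]

theorem riemann_clifford_full_contraction_scalar_general
    (h3 : IsSMulRegular (CliffordAlgebra Q) (3 : K)) {R : I → I → I → I → K}
    (hanti : ∀ a b c d, R a b c d = -R a b d c) (hpair : ∀ a b c d, R a b c d = R c d a b)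
    (hBianchi : ∀ a b c d, R a b c d + R a c d b + R a d b c = 0) :
    (2 : K) • ∑ a, ∑ b, ∑ c, ∑ d, R a b c d • (ι Q (v a) * ι Q (v b) * ι Q (v c) * ι Q (v d)) =
      (-∑ a, ∑ c, polarRicci Q v R a c * polar Q (v a) (v c)) • 1 := by
  rw [sum_smul_ι_mul_ι_mul_ι_mul_ι_eq_neg_sum_polarRicci Q v h3 hanti hBianchi, smul_neg,
    two_smul_sum_smul_ι_mul_ι_of_symm Q v (polarRicci_comm Q v hpair), neg_smul]

end

theorem polar_eq_neg_inner_of_eq_neg_norm_sq_div_two {E : Type*} [NormedAddCommGroup E]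
    [InnerProductSpace ℝ E] {Q : QuadraticForm ℝ E} (hQ : ∀ x, Q x = -(‖x‖ ^ 2 / 2)) (x y : E) :
    QuadraticMap.polar Q x y = -inner ℝ x y := by
  rw [QuadraticMap.polar, hQ, hQ, hQ, norm_add_sq_real]
  ring

theorem polar_single_single_of_eq_neg_norm_sq_div_two {I : Type*} [Fintype I] [DecidableEq I]
    {Q : QuadraticForm ℝ (EuclideanSpace ℝ I)} (hQ : ∀ x, Q x = -(‖x‖ ^ 2 / 2)) (a b : I) :
    QuadraticMap.polar Q (EuclideanSpace.single a 1) (EuclideanSpace.single b 1) =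
      if a = b then -1 else 0 := by
  rw [polar_eq_neg_inner_of_eq_neg_norm_sq_div_two hQ, EuclideanSpace.inner_single_left]
  simp [apply_ite]

/-- Second identity of equation (4.13) in the proof of Proposition 4.7: in the
Clifford algebra of the quadratic form `Q(x) = −‖x‖²/2` on Euclidean `ℝⁿ`, with
`β_a = ι(e_a)`, a Riemann-type tensor `R` satisfies
`Σ_{a,b,c,d} R_{abcd} β_a β_b β_c β_d = −(Sc/2)·1` where `Sc = Σ_{a,c} R_{caca}`. -/
theorem riemann_clifford_full_contraction_scalar (n : ℕ) (hn : 1 ≤ n)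
    (Q : QuadraticForm ℝ (EuclideanSpace ℝ (Fin n)))
    (hQ : ∀ x : EuclideanSpace ℝ (Fin n), Q x = -(‖x‖ ^ 2 / 2))
    (β : Fin n → CliffordAlgebra Q)
    (hβ : ∀ a, β a = CliffordAlgebra.ι Q (EuclideanSpace.single a (1 : ℝ)))
    (R : Fin n → Fin n → Fin n → Fin n → ℝ)
    (hR1 : ∀ a b c d, R a b c d = -R b a c d)
    (hR2 : ∀ a b c d, R a b c d = -R a b d c)
    (hR3 : ∀ a b c d, R a b c d = R c d a b)
    (hBianchi : ∀ a b c d, R a b c d + R a c d b + R a d b c = 0) :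
    ∑ a, ∑ b, ∑ c, ∑ d, R a b c d • (β a * β b * β c * β d)
      = (-(∑ a, ∑ c, R c a c a) / 2) • (1 : CliffordAlgebra Q) := by
  rw [div_eq_inv_mul, mul_smul, eq_inv_smul_iff₀ two_ne_zero]
  simp only [hβ, riemann_clifford_full_contraction_scalar_general Q (EuclideanSpace.single · 1)
    ((IsUnit.mk0 3 three_ne_zero).isSMulRegular _) hR2 hR3 hBianchi]
  simpa [polarRicci, polar_single_single_of_eq_neg_norm_sq_div_two hQ] using Finset.sum_comm
end
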